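/- Let m ≥ 2 and let F = (R ∪ S, E) be a balanced bipartite graph on 2m vertices with parts R = {r₁, …, r_m} and S = {s₁, …, s_m} labelled so that d(r₁) ≤ … ≤ d(r_m) and d(s₁) ≤ … ≤ d(s_m). Suppose that for every integer k with 1 ≤ k ≤ m/2, one has d(r_k) > k and d(s_k) > k. Then F has a Hamiltonian cycle. -/

import Mathlib

/-!
As long as some vertex of `R` is not joined to some vertex of `S`, pick such a pair `u ∈ R`, `v ∈ S`
with `d(u) + d(v)` maximal. Say `d(u) ≤ d(v)`. The `m - d(v)` non-neighbours of `v` in `R` all have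
degree at most `d(u)`, so if `d(u) + d(v) ≤ m` then at least `d(u)` vertices of `R` have degree at
most `d(u) ≤ m / 2`, which the degree condition forbids. Hence `d(u) + d(v) > m`. If adding the edge
`uv` creates a Hamiltonian cycle, then `u` and `v` are the ends of a Hamiltonian path, and, by
counting, some edge `xy` of this path (`x` on the side of `u`) has `y` adjacent to `u` and `x`
adjacent to `v`; replacing `xy` by `uy` and `vx` closes the path up without `uv`. So `uv` may be
added, and repeating this ends at the complete bipartite graph.
-/

section Hamiltonian

open SimpleGraph Finset

variable {V : Type*} {G : SimpleGraph V} {u v w : V}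

theorem snd_eq_or_penultimate_eq_of_mem_edges {c : G.Walk u u} (hc : c.IsCycle)
    (h : s(u, v) ∈ c.edges) : c.snd = v ∨ c.penultimate = v := by
  cases c with
  | nil => simp at h
  | cons hadj q =>
    rw [Walk.edges_cons, List.mem_cons] at h
    rcases h with h | h
    · exact .inl (by simpa using (Sym2.congr_right.1 h).symm)
    · have hq : ¬ q.Nil := Walk.not_nil_of_isCycle_cons hc
      rw [Walk.penultimate_cons_of_not_nil hadj q hq]
      exact .inr (((Walk.cons_isCycle_iff q hadj).1 hc).1.eq_penultimate_of_mem_edges h).symm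

variable [DecidableEq V]

theorem isHamiltonianCycle_reverse {c : G.Walk u u} (hc : c.IsHamiltonianCycle) :
    c.reverse.IsHamiltonianCycle := by
  rw [Walk.isHamiltonianCycle_iff_isCycle_and_support_count_tail_eq_one] at hc ⊢
  refine ⟨hc.1.reverse, fun a ↦ ?_⟩
  rw [← hc.2 a, Walk.support_reverse, List.tail_reverse, List.count_reverse]
  exact (c.tail_support_perm_dropLast_support.count_eq a).symm

theorem exists_isHamiltonian_walk_notMem_edges_of_snd_eq {c : G.Walk u u}
    (hc : c.IsHamiltonianCycle) (hv : c.snd = v) :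
    ∃ p : G.Walk u v, p.IsHamiltonian ∧ s(u, v) ∉ p.edges := by
  cases c with
  | nil => exact absurd hc.isCycle Walk.not_isCycle_nil
  | cons h q =>
    rw [Walk.snd_cons] at hv
    subst hv
    refine ⟨q.reverse, fun a ↦ ?_, ?_⟩
    · simpa using hc.isHamiltonian_tail a
    · simpa using ((Walk.cons_isCycle_iff q h).1 hc.isCycle).2

theorem exists_isHamiltonian_walk_notMem_edges {c : G.Walk w w} (hc : c.IsHamiltonianCycle)
    (huv : s(u, v) ∈ c.edges) : ∃ p : G.Walk u v, p.IsHamiltonian ∧ s(u, v) ∉ p.edges := by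
  have hu : u ∈ c.support := hc.mem_support u
  have hmem : s(u, v) ∈ (c.rotate u hu).edges := (c.rotate_edges u hu).mem_iff.2 huv
  have hrot : (c.rotate u hu).IsHamiltonianCycle := hc.rotate hu
  rcases snd_eq_or_penultimate_eq_of_mem_edges hrot.isCycle hmem with hsnd | hpen
  · exact exists_isHamiltonian_walk_notMem_edges_of_snd_eq hrot hsnd
  · exact exists_isHamiltonian_walk_notMem_edges_of_snd_eq
      (isHamiltonianCycle_reverse hrot) (by simpa)

variable [Fintype V]

theorem exists_isHamiltonian_walk_of_isHamiltonian_sup_edge [Nontrivial V]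
    (h : (G ⊔ edge u v).IsHamiltonian) (hG : ¬ G.IsHamiltonian) :
    ∃ p : G.Walk u v, p.IsHamiltonian := by
  obtain ⟨c, hc⟩ := h.exists_isHamiltonianCycle u
  have mem_edgeSet_of_ne {e : Sym2 V} (he : e ∈ (G ⊔ edge u v).edgeSet) (hne : e ≠ s(u, v)) :
      e ∈ G.edgeSet := by
    rw [edgeSet_sup, Set.mem_union] at he
    exact he.resolve_right fun he ↦ hne (by simp_all [edge])
  by_cases huv : s(u, v) ∈ c.edges
  · obtain ⟨p, hp, hp'⟩ := exists_isHamiltonian_walk_notMem_edges hc huv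
    have hpG : ∀ e ∈ p.edges, e ∈ G.edgeSet := fun e he ↦
      mem_edgeSet_of_ne (p.edges_subset_edgeSet he) (ne_of_mem_of_not_mem he hp')
    exact ⟨p.transfer G hpG, fun a ↦ by simpa using hp a⟩
  · have hcG : ∀ e ∈ c.edges, e ∈ G.edgeSet := fun e he ↦
      mem_edgeSet_of_ne (c.edges_subset_edgeSet he) (ne_of_mem_of_not_mem he huv)
    refine absurd (fun _ ↦ ⟨u, c.transfer G hcG, ?_⟩) hG
    exact Walk.isHamiltonianCycle_iff_isCycle_and_length_eq.2
      ⟨hc.isCycle.transfer hcG, by simpa using hc.length_eq⟩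

theorem isHamiltonian_of_isHamiltonian_walk_of_adj {p : G.Walk u v} (hp : p.IsHamiltonian)
    (hvu : G.Adj v u) (hV : 3 ≤ Fintype.card V) : G.IsHamiltonian := fun _ ↦ by
  have hlen := hp.length_eq
  refine ⟨v, .cons hvu p, Walk.isHamiltonianCycle_iff_isCycle_and_length_eq.2 ⟨?_, ?_⟩⟩
  · refine Walk.isCycle_iff_isPath_tail_and_le_length.2 ⟨by simpa using hp.isPath, ?_⟩
    rw [Walk.length_cons]
    lia
  · rw [Walk.length_cons]
    lia

theorem isHamiltonian_of_adj_getVert {p : G.Walk u v} (hp : p.IsHamiltonian) {i : ℕ}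
    (hu : G.Adj u (p.getVert (i + 1))) (hv : G.Adj v (p.getVert i)) (hV : 3 ≤ Fintype.card V) :
    G.IsHamiltonian := by
  have hi : i < p.length := by
    by_contra! hi
    exact G.loopless.irrefl v (by rwa [p.getVert_of_length_le hi] at hv)
  let q : G.Walk (p.getVert i) v := (p.take i).reverse.append (.cons hu (p.drop (i + 1)))
  have hq : q.IsHamiltonian := fun a ↦ by
    rw [← hp a, Walk.support_append, Walk.support_cons, List.tail_cons, Walk.support_reverse,
      Walk.support_take, Walk.drop_support_eq_support_drop_min, min_eq_left hi, List.count_append,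
      List.count_reverse, ← List.count_append, List.take_append_drop]
  exact isHamiltonian_of_isHamiltonian_walk_of_adj hq hv hV

theorem degree_le_card_filter_adj_getVert [DecidableRel G.Adj] {p : G.Walk u v}
    (hp : p.IsHamiltonian) :
    G.degree v ≤ #{i ∈ range p.length | G.Adj v (p.getVert i)} := by
  have : G.neighborFinset v ⊆ image p.getVert {i ∈ range p.length | G.Adj v (p.getVert i)} := by
    intro w hw
    rw [mem_neighborFinset] at hw
    obtain ⟨i, rfl, hi⟩ := Walk.mem_support_iff_exists_getVert.1 (hp.mem_support w)
    have : i ≠ p.length := by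
      rintro rfl
      simp at hw
    exact mem_image_of_mem _ (mem_filter.2 ⟨mem_range.2 (by lia), hw⟩)
  exact (card_le_card this).trans card_image_le

theorem degree_le_card_filter_adj_getVert_succ [DecidableRel G.Adj] {p : G.Walk u v}
    (hp : p.IsHamiltonian) :
    G.degree u ≤ #{i ∈ range p.length | G.Adj u (p.getVert (i + 1))} := by
  have : G.neighborFinset u ⊆
      image (fun i ↦ p.getVert (i + 1)) {i ∈ range p.length | G.Adj u (p.getVert (i + 1))} := by
    intro w hw
    rw [mem_neighborFinset] at hw
    obtain ⟨i, rfl, hi⟩ := Walk.mem_support_iff_exists_getVert.1 (hp.mem_support w)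
    have : i ≠ 0 := by
      rintro rfl
      simp at hw
    obtain ⟨i, rfl⟩ := Nat.exists_eq_succ_of_ne_zero this
    exact mem_image_of_mem (fun i ↦ p.getVert (i + 1)) (mem_filter.2 ⟨mem_range.2 (by lia), hw⟩)
  exact (card_le_card this).trans card_image_le

variable [DecidableRel G.Adj] {R S : Finset V}

theorem degree_add_degree_le_card_of_not_isHamiltonian (hG : G.IsBipartiteWith R S)
    (hu : u ∈ R) (hv : v ∈ S) {p : G.Walk u v} (hp : p.IsHamiltonian)
    (hV : 3 ≤ Fintype.card V) (hnot : ¬ G.IsHamiltonian) : G.degree u + G.degree v ≤ #R := by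
  let A : Finset ℕ := {i ∈ range p.length | G.Adj u (p.getVert (i + 1))}
  let B : Finset ℕ := {i ∈ range p.length | G.Adj v (p.getVert i)}
  let P : Finset ℕ := {i ∈ range p.length | p.getVert i ∈ R}
  have hAP : A ⊆ P := monotone_filter_right _ fun i hi hadj ↦ by
    have hS : p.getVert (i + 1) ∈ S := hG.mem_of_mem_adj hu hadj
    exact hG.mem_of_mem_adj' hS (p.adj_getVert_succ (mem_range.1 hi))
  have hBP : B ⊆ P := monotone_filter_right _ fun i _ hadj ↦ hG.mem_of_mem_adj' hv hadj.symm
  have hAB : Disjoint A B := disjoint_filter.2 fun i _ hA hB ↦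
    hnot (isHamiltonian_of_adj_getVert hp hA hB hV)
  have hPR : #P ≤ #R := card_le_card_of_injOn p.getVert (fun i hi ↦ (mem_filter.1 hi).2)
    (hp.isPath.getVert_injOn.mono fun i hi ↦ (mem_range.1 (mem_filter.1 hi).1).le)
  calc G.degree u + G.degree v ≤ #A + #B := add_le_add
        (degree_le_card_filter_adj_getVert_succ hp) (degree_le_card_filter_adj_getVert hp)
    _ = #(A ∪ B) := (card_union_of_disjoint hAB).symm
    _ ≤ #P := card_le_card (union_subset hAP hBP)
    _ ≤ #R := hPR

theorem isHamiltonian_of_isHamiltonian_sup_edge (hG : G.IsBipartiteWith R S)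
    (hu : u ∈ R) (hv : v ∈ S) (hdeg : #R < G.degree u + G.degree v)
    (h : (G ⊔ edge u v).IsHamiltonian) : G.IsHamiltonian := by
  by_contra hnot
  have huv : u ≠ v := fun h ↦ Set.disjoint_left.1 hG.disjoint hu (h ▸ hv)
  have : Nontrivial V := ⟨u, v, huv⟩
  have hV : 3 ≤ Fintype.card V := by
    have h1 : 1 < Fintype.card V := Fintype.one_lt_card
    have h2 : Fintype.card V ≠ 2 := fun h2 ↦ not_isHamiltonian_of_card_eq_two h2 h
    lia
  obtain ⟨p, hp⟩ := exists_isHamiltonian_walk_of_isHamiltonian_sup_edge h hnot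
  exact hdeg.not_ge (degree_add_degree_le_card_of_not_isHamiltonian hG hu hv hp hV hnot)

end Hamiltonian

section Complete

open SimpleGraph Finset

theorem cycleGraph_isContained_completeBipartiteGraph (m : ℕ) :
    cycleGraph (2 * m) ⊑ completeBipartiteGraph (Fin m) (Fin m) := by
  let f (t : Fin (2 * m)) : Fin m ⊕ Fin m :=
    if t.val % 2 = 0 then .inl ⟨t / 2, by lia⟩ else .inr ⟨t / 2, by lia⟩
  have hf : Function.Injective f := fun t u h ↦ by grind
  refine ⟨⟨⟨f, fun {t u} h ↦ ?_⟩, hf⟩⟩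
  have hparity : ¬ (t.val % 2 = 0 ↔ u.val % 2 = 0) := fun htu ↦
    (cycleGraph.bicoloring_of_even (2 * m) (even_two_mul m)).valid h (decide_eq_decide.2 htu)
  grind [completeBipartiteGraph_adj]

theorem isHamiltonian_of_isCompleteBetween {V : Type*} [Fintype V] [DecidableEq V]
    {G : SimpleGraph V} {R S : Finset V} (h : G.IsCompleteBetween R S) (hRS : #R = #S)
    (hV : Fintype.card V = #R + #S) (hR : 2 ≤ #R) : G.IsHamiltonian := fun _ ↦ by
  have hK : completeBipartiteGraph (Fin #R) (Fin #R) ⊑ G :=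
    completeBipartiteGraph_isContained_iff.2 ⟨R, S, by simp, by simp [hRS], h⟩
  obtain ⟨v, c, hc, hlen⟩ := (cycleGraph_isContained_iff (by lia)).1
    ((cycleGraph_isContained_completeBipartiteGraph #R).trans hK)
  exact ⟨v, c, Walk.isHamiltonianCycle_iff_isCycle_and_length_eq.2 ⟨hc, by lia⟩⟩

end Complete

section MoonMoser

open SimpleGraph Finset

variable {V : Type*} {G H : SimpleGraph V} {R S : Finset V} {u v : V}

theorem isBipartiteWith_sup_edge {s t : Set V} (hG : G.IsBipartiteWith s t) (hu : u ∈ s)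
    (hv : v ∈ t) : (G ⊔ edge u v).IsBipartiteWith s t where
  disjoint := hG.disjoint
  mem_of_adj a b hab := by
    rcases hab with hab | hab
    · exact hG.mem_of_adj hab
    · rw [edge_adj] at hab
      rcases hab.1 with ⟨rfl, rfl⟩ | ⟨rfl, rfl⟩
      · exact .inl ⟨hu, hv⟩
      · exact .inr ⟨hv, hu⟩

/-- The degree condition of Moon and Moser on one part `R`: the `k`-th smallest degree in `R`
exceeds `k` whenever `1 ≤ k ≤ #R / 2`. No labelling of `R` is chosen: that degree exceeds `k`
exactly when fewer than `k` vertices of `R` have degree at most `k`. -/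
def MoonMoserCondition (G : SimpleGraph V) [G.LocallyFinite] (R : Finset V) : Prop :=
  ∀ k, 0 < k → 2 * k ≤ #R → #{v ∈ R | G.degree v ≤ k} < k

theorem MoonMoserCondition.mono [G.LocallyFinite] [H.LocallyFinite] (hGH : G ≤ H)
    (hG : MoonMoserCondition G R) : MoonMoserCondition H R := fun k hk hkR ↦
  (card_le_card (monotone_filter_right R fun _ _ ↦ (degree_le_of_le hGH).trans)).trans_lt
    (hG k hk hkR)

theorem MoonMoserCondition.degree_pos [G.LocallyFinite] (hR : MoonMoserCondition G R)
    (hcard : 2 ≤ #R) (hu : u ∈ R) : 0 < G.degree u := by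
  by_contra! h
  have : #{v ∈ R | G.degree v ≤ 1} < 1 := hR 1 one_pos hcard
  exact card_ne_zero_of_mem (mem_filter.2 ⟨hu, h.trans zero_le_one⟩) (Nat.lt_one_iff.1 this)

theorem moonMoserCondition_map_of_monotone_degree [G.LocallyFinite] {m : ℕ} (r : Fin m ↪ V)
    (hmono : Monotone fun i ↦ G.degree (r i))
    (h : ∀ k : Fin m, 2 * ((k : ℕ) + 1) ≤ m → (k : ℕ) + 1 < G.degree (r k)) :
    MoonMoserCondition G (univ.map r) := fun k hk hkm ↦ by
  rw [card_map, card_univ, Fintype.card_fin] at hkm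
  let j : Fin m := ⟨k - 1, by lia⟩
  have hj : k < G.degree (r j) := by simpa [j, Nat.sub_add_cancel hk] using h j (by grind)
  have hsub : ({i | G.degree (r i) ≤ k} : Finset (Fin m)) ⊆ Iio j := fun i hi ↦ by
    simp only [mem_filter, mem_univ, true_and] at hi
    exact mem_Iio.2 (hmono.reflect_lt (hi.trans_lt hj))
  calc #{v ∈ univ.map r | G.degree v ≤ k}
      = #{i | G.degree (r i) ≤ k} := by rw [filter_map, card_map]; rfl
    _ ≤ #(Iio j) := card_le_card hsub
    _ < k := by rw [Fin.card_Iio]; grind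

theorem card_filter_not_adj_add_degree [G.LocallyFinite] [DecidableRel G.Adj]
    (hG : G.IsBipartiteWith R S) (hv : v ∈ S) :
    #{x ∈ R | ¬ G.Adj x v} + G.degree v = #R := by
  rw [← card_neighborFinset_eq_degree, isBipartiteWith_neighborFinset' hG hv, add_comm]
  exact card_filter_add_card_filter_not _

theorem MoonMoserCondition.card_lt_degree_add_degree [G.LocallyFinite]
    (hR : MoonMoserCondition G R) (hcard : 2 ≤ #R) (hG : G.IsBipartiteWith R S)
    (hu : u ∈ R) (hv : v ∈ S) (huv : G.degree u ≤ G.degree v)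
    (hmax : ∀ x ∈ R, ¬ G.Adj x v → G.degree x ≤ G.degree u) :
    #R < G.degree u + G.degree v := by
  classical
  by_contra! hle
  have hfew : #{x ∈ R | G.degree x ≤ G.degree u} < G.degree u :=
    hR _ (hR.degree_pos hcard hu) (by lia)
  have hmany : #{x ∈ R | ¬ G.Adj x v} ≤ #{x ∈ R | G.degree x ≤ G.degree u} :=
    card_le_card (monotone_filter_right R hmax)
  have := card_filter_not_adj_add_degree hG hv
  lia

theorem exists_not_adj_and_card_lt_degree_add_degree [G.LocallyFinite] (hG : G.IsBipartiteWith R S)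
    (hRS : #R = #S) (hcard : 2 ≤ #R) (hR : MoonMoserCondition G R) (hS : MoonMoserCondition G S)
    (hcomplete : ¬ G.IsCompleteBetween R S) :
    ∃ u ∈ R, ∃ v ∈ S, ¬ G.Adj u v ∧ #R < G.degree u + G.degree v := by
  classical
  obtain ⟨a, ha, b, hb, hab⟩ : ∃ a ∈ R, ∃ b ∈ S, ¬ G.Adj a b := by
    simpa [IsCompleteBetween] using hcomplete
  obtain ⟨⟨u, v⟩, huv, hmax⟩ := exists_max_image {e ∈ R ×ˢ S | ¬ G.Adj e.1 e.2}
    (fun e ↦ G.degree e.1 + G.degree e.2) ⟨(a, b), by simp [ha, hb, hab]⟩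
  simp only [mem_filter, mem_product, Prod.forall, and_imp] at huv hmax
  obtain ⟨⟨hu, hv⟩, hadj⟩ := huv
  refine ⟨u, hu, v, hv, hadj, ?_⟩
  rcases le_total (G.degree u) (G.degree v) with hle | hle
  · refine hR.card_lt_degree_add_degree hcard hG hu hv hle fun x hx hxv ↦ ?_
    exact Nat.le_of_add_le_add_right (hmax x v hx hv hxv)
  · rw [hRS, add_comm]
    refine hS.card_lt_degree_add_degree (hRS ▸ hcard) hG.symm hv hu hle fun y hy hyu ↦ ?_
    exact Nat.le_of_add_le_add_left (hmax u y hu hy fun h ↦ hyu h.symm)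

theorem moon_moser_hamiltonian_general [Fintype V] [DecidableEq V] [decAdj : DecidableRel G.Adj]
    (hG : G.IsBipartiteWith R S) (hV : Fintype.card V = #R + #S) (hRS : #R = #S) (hcard : 2 ≤ #R)
    (hR : MoonMoserCondition G R) (hS : MoonMoserCondition G S) : G.IsHamiltonian := by
  induction G using WellFoundedGT.induction generalizing decAdj with
  | ind G ih =>
  by_cases hcomplete : G.IsCompleteBetween R S
  · exact isHamiltonian_of_isCompleteBetween hcomplete hRS hV hcard
  · obtain ⟨u, hu, v, hv, hadj, hdeg⟩ :=
      exists_not_adj_and_card_lt_degree_add_degree hG hRS hcard hR hS hcomplete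
    have hne : u ≠ v := fun h ↦ Set.disjoint_left.1 hG.disjoint hu (h ▸ hv)
    exact isHamiltonian_of_isHamiltonian_sup_edge hG hu hv hdeg <|
      ih (G ⊔ edge u v) (G.lt_sup_edge _ _ hne hadj) (isBipartiteWith_sup_edge hG hu hv)
        (hR.mono le_sup_left) (hS.mono le_sup_left)

end MoonMoser

theorem isBipartiteWith_map_inl_map_inr {α β : Type*} [Fintype α] [Fintype β]
    {F : SimpleGraph (α ⊕ β)} (hα : ∀ a b, ¬ F.Adj (.inl a) (.inl b))
    (hβ : ∀ a b, ¬ F.Adj (.inr a) (.inr b)) :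
    F.IsBipartiteWith (Finset.univ.map (.inl : α ↪ α ⊕ β))
      (Finset.univ.map (.inr : β ↪ α ⊕ β)) where
  disjoint := by simpa using Set.isCompl_range_inl_range_inr.disjoint
  mem_of_adj
    | .inl a, .inl b, h => absurd h (hα a b)
    | .inr a, .inr b, h => absurd h (hβ a b)
    | .inl _, .inr _, _ => by simp
    | .inr _, .inl _, _ => by simp

theorem ncard_neighborSet {V : Type*} (G : SimpleGraph V) [G.LocallyFinite] (v : V) :
    (G.neighborSet v).ncard = G.degree v := by
  rw [Set.ncard_eq_toFinset_card', Set.toFinset_card, G.card_neighborSet_eq_degree]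

/-- Moon–Moser: let F be a balanced bipartite graph on parts
R = {r₁,…,r_m} and S = {s₁,…,s_m} (here rᵢ = inl (i−1), sᵢ = inr (i−1)), labelled so that
degrees are nondecreasing. If d(r_k) > k and d(s_k) > k for every 1 ≤ k ≤ m/2, then F
has a Hamiltonian cycle. -/
theorem moon_moser_hamiltonian (m : ℕ) (hm : 2 ≤ m)
    (F : SimpleGraph (Fin m ⊕ Fin m))
    (hbipR : ∀ a b : Fin m, ¬ F.Adj (Sum.inl a) (Sum.inl b))
    (hbipS : ∀ a b : Fin m, ¬ F.Adj (Sum.inr a) (Sum.inr b))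
    (hmonoR : ∀ i j : Fin m, i ≤ j →
      (F.neighborSet (Sum.inl i)).ncard ≤ (F.neighborSet (Sum.inl j)).ncard)
    (hmonoS : ∀ i j : Fin m, i ≤ j →
      (F.neighborSet (Sum.inr i)).ncard ≤ (F.neighborSet (Sum.inr j)).ncard)
    (hR : ∀ k : Fin m, 2 * ((k : ℕ) + 1) ≤ m →
      (k : ℕ) + 1 < (F.neighborSet (Sum.inl k)).ncard)
    (hS : ∀ k : Fin m, 2 * ((k : ℕ) + 1) ≤ m →
      (k : ℕ) + 1 < (F.neighborSet (Sum.inr k)).ncard) :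
    ∃ (v : Fin m ⊕ Fin m) (c : F.Walk v v), c.IsHamiltonianCycle := by
  classical
  simp only [ncard_neighborSet] at hmonoR hmonoS hR hS
  have hF : F.IsHamiltonian := moon_moser_hamiltonian_general
    (isBipartiteWith_map_inl_map_inr hbipR hbipS) (by simp) (by simp) (by simpa)
    (moonMoserCondition_map_of_monotone_degree .inl hmonoR hR)
    (moonMoserCondition_map_of_monotone_degree .inr hmonoS hS)
  exact hF (by rw [Fintype.card_sum, Fintype.card_fin]; lia)
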